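/- arXiv:2405.03664 — 2 statements merged into one kernel-verified Lean document; each statement's English description precedes it below -/
import Mathlib

section
/- For any Borel probability measures ν and ν' on X, any p ≥ 1, k ≥ 0 and δ ∈ (0, 1), the (p,k)-RPW distance between ν and the contaminated distribution (1−δ)ν + δν' is at most δ: RPW_{p,k}(ν, (1−δ)ν + δν') ≤ δ. -/
open MeasureTheory

noncomputable section

/-- `γ` is an `α`-partial transport plan from `μ` to `ν`: a Borel measure on `X × X` of
total mass `α` whose first marginal is dominated by `μ` and second marginal by `ν`. -/
def IsPartialPlan {X : Type*} [MeasurableSpace X] (μ ν : Measure X) (α : ℝ)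
    (γ : Measure (X × X)) : Prop :=
  γ Set.univ = ENNReal.ofReal α ∧ γ.map Prod.fst ≤ μ ∧ γ.map Prod.snd ≤ ν

/-- The cost `w_p(γ) = (∫ c(x,y)^p dγ)^(1/p)` of a transport plan. -/
def planCost {X : Type*} [MetricSpace X] [MeasurableSpace X] (p : ℝ)
    (γ : Measure (X × X)) : ℝ :=
  (∫ z, dist z.1 z.2 ^ p ∂γ) ^ (1 / p)

/-- The `α`-partial `p`-Wasserstein distance `W_{p,α}(μ, ν)`. -/
def partialW {X : Type*} [MetricSpace X] [MeasurableSpace X] (p α : ℝ)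
    (μ ν : Measure X) : ℝ :=
  sInf { c : ℝ | ∃ γ : Measure (X × X), IsPartialPlan μ ν α γ ∧ c = planCost p γ }

/-- The `(p,k)`-RPW distance: the least `ε ∈ [0,1]` with `W_{p,1-ε}(μ,ν) ≤ kε`. -/
def RPW {X : Type*} [MetricSpace X] [MeasurableSpace X] (p k : ℝ)
    (μ ν : Measure X) : ℝ :=
  sInf { ε : ℝ | ε ∈ Set.Icc (0:ℝ) 1 ∧ partialW p (1 - ε) μ ν ≤ k * ε }

section PartialTransport

variable {X : Type*} [MeasurableSpace X] {μ ν ρ : Measure X} {α : ℝ}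

/-- The transport plan that leaves the mass of `ρ` in place: the image of `ρ` under the diagonal
embedding. It lets two measures share their common mass `ρ` at no cost. -/
def diagonalPlan (ρ : Measure X) : Measure (X × X) :=
  ρ.map fun x => (x, x)

lemma map_fst_diagonalPlan (ρ : Measure X) : (diagonalPlan ρ).map Prod.fst = ρ := by
  rw [diagonalPlan, Measure.map_map measurable_fst (by fun_prop)]
  exact Measure.map_id

lemma map_snd_diagonalPlan (ρ : Measure X) : (diagonalPlan ρ).map Prod.snd = ρ := by
  rw [diagonalPlan, Measure.map_map measurable_snd (by fun_prop)]
  exact Measure.map_id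

lemma isPartialPlan_diagonalPlan (hmass : ρ Set.univ = ENNReal.ofReal α) (hμ : ρ ≤ μ)
    (hν : ρ ≤ ν) : IsPartialPlan μ ν α (diagonalPlan ρ) := by
  refine ⟨?_, (map_fst_diagonalPlan ρ).trans_le hμ, (map_snd_diagonalPlan ρ).trans_le hν⟩
  rw [diagonalPlan, Measure.map_apply (by fun_prop) .univ, Set.preimage_univ, hmass]

variable [MetricSpace X] {p k ε : ℝ}

lemma planCost_nonneg (p : ℝ) (γ : Measure (X × X)) : 0 ≤ planCost p γ :=
  Real.rpow_nonneg (integral_nonneg fun _ => Real.rpow_nonneg dist_nonneg p) _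

lemma partialW_nonneg (p α : ℝ) (μ ν : Measure X) : 0 ≤ partialW p α μ ν := by
  refine Real.sInf_nonneg ?_
  rintro _ ⟨γ, -, rfl⟩
  exact planCost_nonneg p γ

lemma partialW_le_planCost (p : ℝ) {γ : Measure (X × X)} (hγ : IsPartialPlan μ ν α γ) :
    partialW p α μ ν ≤ planCost p γ := by
  refine csInf_le ⟨0, ?_⟩ ⟨γ, hγ, rfl⟩
  rintro _ ⟨γ', -, rfl⟩
  exact planCost_nonneg p γ'

lemma rpw_le (hε : ε ∈ Set.Icc (0 : ℝ) 1) (h : partialW p (1 - ε) μ ν ≤ k * ε) :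
    RPW p k μ ν ≤ ε :=
  csInf_le ⟨0, fun _ hη => hη.1.1⟩ ⟨hε, h⟩

variable [OpensMeasurableSpace X] [SecondCountableTopology X]

lemma planCost_diagonalPlan (hp : 0 < p) (ρ : Measure X) : planCost p (diagonalPlan ρ) = 0 := by
  have hcost : Measurable fun z : X × X => dist z.1 z.2 ^ p := by fun_prop
  have hintegral : ∫ z, dist z.1 z.2 ^ p ∂diagonalPlan ρ = 0 := by
    rw [diagonalPlan, integral_map (by fun_prop) hcost.aestronglyMeasurable]
    simp [Real.zero_rpow hp.ne']
  rw [planCost, hintegral, Real.zero_rpow (one_div_pos.2 hp).ne']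

lemma partialW_eq_zero_of_le_of_le (hp : 0 < p) (hmass : ρ Set.univ = ENNReal.ofReal α)
    (hμ : ρ ≤ μ) (hν : ρ ≤ ν) : partialW p α μ ν = 0 := by
  refine le_antisymm ?_ (partialW_nonneg p α μ ν)
  calc partialW p α μ ν ≤ planCost p (diagonalPlan ρ) :=
        partialW_le_planCost p (isPartialPlan_diagonalPlan hmass hμ hν)
    _ = 0 := planCost_diagonalPlan hp ρ

lemma rpw_le_of_le_of_le (hp : 0 < p) (hk : 0 ≤ k) (hε : ε ∈ Set.Icc (0 : ℝ) 1)
    (hmass : ρ Set.univ = ENNReal.ofReal (1 - ε)) (hμ : ρ ≤ μ) (hν : ρ ≤ ν) :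
    RPW p k μ ν ≤ ε := by
  refine rpw_le hε ?_
  rw [partialW_eq_zero_of_le_of_le hp hmass hμ hν]
  exact mul_nonneg hk hε.1

end PartialTransport

theorem rpw_contamination_le_general
    {X : Type*} [MetricSpace X] [SecondCountableTopology X] [MeasurableSpace X]
    [OpensMeasurableSpace X] (ν ν' : Measure X) [IsProbabilityMeasure ν]
    {p k δ : ℝ} (hp : 0 < p) (hk : 0 ≤ k) (hδ : δ ∈ Set.Icc (0 : ℝ) 1) :
    RPW p k ν (ENNReal.ofReal (1 - δ) • ν + ENNReal.ofReal δ • ν') ≤ δ := by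
  have hmass : (ENNReal.ofReal (1 - δ) • ν) Set.univ = ENNReal.ofReal (1 - δ) := by simp
  have hweight : ENNReal.ofReal (1 - δ) ≤ 1 :=
    ENNReal.ofReal_le_one.2 (sub_le_self 1 hδ.1)
  have hleft : ENNReal.ofReal (1 - δ) • ν ≤ ν :=
    Measure.le_iff.2 fun s _ => mul_le_of_le_one_left zero_le hweight
  exact rpw_le_of_le_of_le hp hk hδ hmass hleft (Measure.le_add_right le_rfl)

/-- For Borel probability measures `ν, ν'`, `p ≥ 1`, `k ≥ 0`, and
`δ ∈ (0,1)`, the `(p,k)`-RPW distance between `ν` and `(1-δ)ν + δν'` is at most `δ`. -/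
theorem rpw_contamination_le
    {X : Type*} [MetricSpace X] [CompactSpace X] [MeasurableSpace X] [BorelSpace X]
    (hdiam : ∀ a b : X, dist a b ≤ 1)
    (ν ν' : Measure X) [IsProbabilityMeasure ν] [IsProbabilityMeasure ν']
    (p k : ℝ) (hp : 1 ≤ p) (hk : 0 ≤ k)
    (δ : ℝ) (hδ : δ ∈ Set.Ioo (0:ℝ) 1) :
    RPW p k ν (ENNReal.ofReal (1 - δ) • ν + ENNReal.ofReal δ • ν') ≤ δ :=
  rpw_contamination_le_general ν ν' (zero_lt_one.trans_le hp) hk (Set.Ioo_subset_Icc_self hδ)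
end
end

section
/- For any Borel probability measures μ and ν on X, the (∞,1)-RPW distance equals the Lévy–Prokhorov distance: RPW_{∞,1}(μ, ν) = π(μ, ν). -/
open MeasureTheory

noncomputable section

/-- The `∞`-cost `w_∞(γ)` of a transport plan: the `γ`-essential supremum of the
distance `c(x, y)`. -/
def planCostInf {X : Type*} [MetricSpace X] [MeasurableSpace X]
    (γ : Measure (X × X)) : ℝ :=
  (essSup (fun z : X × X => ENNReal.ofReal (dist z.1 z.2)) γ).toReal

/-- The `α`-partial `∞`-Wasserstein distance `W_{∞,α}(μ, ν)`. -/
def partialWInf {X : Type*} [MetricSpace X] [MeasurableSpace X] (α : ℝ)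
    (μ ν : Measure X) : ℝ :=
  sInf { c : ℝ | ∃ γ : Measure (X × X), IsPartialPlan μ ν α γ ∧ c = planCostInf γ }

/-- The `(∞,k)`-RPW distance: the least `ε ∈ [0,1]` with `W_{∞,1-ε}(μ,ν) ≤ kε`. -/
def RPWInf {X : Type*} [MetricSpace X] [MeasurableSpace X] (k : ℝ)
    (μ ν : Measure X) : ℝ :=
  sInf { ε : ℝ | ε ∈ Set.Icc (0:ℝ) 1 ∧ partialWInf (1 - ε) μ ν ≤ k * ε }

/-- The Lévy–Prokhorov distance: the infimum of all `ε > 0` with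
`μ(A) ≤ ν(A^ε) + ε` and `ν(A) ≤ μ(A^ε) + ε` for all Borel sets `A`, where
`A^ε = {x : c(x, A) < ε}` is the open `ε`-thickening of `A`. -/
def LPdist {X : Type*} [MetricSpace X] [MeasurableSpace X] (μ ν : Measure X) : ℝ :=
  sInf { ε : ℝ | 0 < ε ∧ ∀ A : Set X, MeasurableSet A →
    μ A ≤ ν (Metric.thickening ε A) + ENNReal.ofReal ε ∧
    ν A ≤ μ (Metric.thickening ε A) + ENNReal.ofReal ε }

/-!
A coupling that moves all but mass `ε` by a distance less than `ε` gives both Lévy–Prokhorov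
inequalities at `ε`, so the content is the converse, a form of Strassen's theorem with slack `δ`.
Cut `X` into finitely many cells of small diameter, up to a set of small mass. The inequalities
`μ(A) ≤ ν(A^ε) + ε`, for unions `A` of cells, are Hall's condition with defect `ε` for the relation
"some point of the cell `i` is `ε`-close to some point of the cell `j`", and so provide a flow
between cells that leaves at most about `ε` of the mass of `μ` unmoved. Within each pair of cells,
the flow is spread out as a product of conditional measures. No limit of couplings is needed,
because both distances are infima.
-/

open Finset in
theorem exists_matching_of_card_le_card_add {α β : Type*} [Fintype α] [Finite β]
    {r : α → β → Prop} {d : ℕ}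
    (hall : ∀ (S : Finset α) (T : Finset β), (∀ a ∈ S, ∀ b, r a b → b ∈ T) → #S ≤ #T + d) :
    ∃ M : Finset (α × β), (∀ m ∈ M, r m.1 m.2) ∧ Set.InjOn Prod.fst (M : Set (α × β)) ∧
      Set.InjOn Prod.snd (M : Set (α × β)) ∧ Fintype.card α ≤ #M + d := by
  classical
  have := Fintype.ofFinite β
  -- With `d` extra partners available to everyone, the condition with defect becomes Hall's own.
  let r' : α → β ⊕ Fin d → Prop := fun a ↦ Sum.elim (r a) fun _ ↦ True
  have hall' : ∀ S : Finset α, #S ≤ #{y | ∃ a ∈ S, r' a y} := by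
    intro S
    obtain rfl | ⟨s, hs⟩ := S.eq_empty_or_nonempty
    · exact Nat.zero_le _
    calc #S ≤ #({b | ∃ a ∈ S, r a b} : Finset β) + d := by
          refine hall S _ fun a ha b hab ↦ ?_
          simpa only [mem_filter_univ] using ⟨a, ha, hab⟩
      _ = #(disjSum ({b | ∃ a ∈ S, r a b} : Finset β) (univ : Finset (Fin d))) := by
          rw [card_disjSum, card_univ, Fintype.card_fin]
      _ ≤ #{y | ∃ a ∈ S, r' a y} := by
          refine card_le_card fun y hy ↦ ?_
          rcases y with b | k
          · simpa [r'] using hy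
          · simpa [r'] using ⟨s, hs⟩
  obtain ⟨F, hF_inj, hF⟩ := (Fintype.all_card_le_filter_rel_iff_exists_injective r').1 hall'
  let M : Finset (α × β) := {m | F m.1 = Sum.inl m.2}
  have hM : ∀ {m}, m ∈ M ↔ F m.1 = Sum.inl m.2 := mem_filter_univ _
  refine ⟨M, fun m hm ↦ ?_, fun m hm m' hm' h ↦ ?_, fun m hm m' hm' h ↦ ?_, ?_⟩
  · simpa only [r', hM.1 hm, Sum.elim_inl] using hF m.1
  · refine Prod.ext h (Sum.inl_injective (β := Fin d) ?_)
    exact (hM.1 hm).symm.trans (congrArg F h |>.trans (hM.1 hm'))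
  · refine Prod.ext (hF_inj ?_) h
    rw [hM.1 hm, hM.1 hm', h]
  · calc Fintype.card α ≤ #((M.image Prod.snd).disjSum (univ : Finset (Fin d))) := by
          refine card_le_card_of_injOn F (fun a _ ↦ ?_) hF_inj.injOn
          rcases h : F a with b | k
          · simpa [M] using ⟨a, h⟩
          · simp
      _ ≤ #M + d := by
          rw [card_disjSum, card_univ, Fintype.card_fin]
          gcongr
          exact card_image_le

/-- Hall's condition with defect `d`, for supplies `a` and demands `b` linked by a relation `R`:
every set of supplies outweighs any set of demands containing all its `R`-neighbours by at most
`d`. Quantifying over all such sets `J` keeps the definition free of decidability choices. -/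
def HallCondition {ι κ 𝕜 : Type*} [AddCommMonoid 𝕜] [LE 𝕜] (R : ι → κ → Prop) (a : ι → 𝕜)
    (b : κ → 𝕜) (d : 𝕜) : Prop :=
  ∀ (I : Finset ι) (J : Finset κ), (∀ i ∈ I, ∀ j, R i j → j ∈ J) →
    ∑ i ∈ I, a i ≤ ∑ j ∈ J, b j + d

/-- A partial flow from supplies `a` to demands `b` along the edges of `R`: the discrete
counterpart of a partial transport plan, with `f i j` the amount moved from `i` to `j`. -/
structure IsPartialFlow {ι κ 𝕜 : Type*} [Fintype ι] [Fintype κ] [AddCommMonoid 𝕜] [LE 𝕜]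
    (R : ι → κ → Prop) (a : ι → 𝕜) (b : κ → 𝕜) (f : ι → κ → 𝕜) : Prop where
  rel_of_ne_zero : ∀ i j, f i j ≠ 0 → R i j
  sum_row_le : ∀ i, ∑ j, f i j ≤ a i
  sum_col_le : ∀ j, ∑ i, f i j ≤ b j

section Flow

open scoped NNReal

variable {ι κ : Type*} {R : ι → κ → Prop}

open Finset in
theorem HallCondition.card_sigma_le [Finite κ] {a : ι → ℕ} {b : κ → ℕ} {d : ℕ}
    (hall : HallCondition R a b d) {S : Finset (Σ i, Fin (a i))} {T : Finset (Σ j, Fin (b j))}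
    (hST : ∀ x ∈ S, ∀ y : Σ j, Fin (b j), R x.1 y.1 → y ∈ T) : #S ≤ #T + d := by
  classical
  have := Fintype.ofFinite κ
  let J : Finset κ := {j | ∃ x ∈ S, R x.1 j}
  have hJ : J.sigma (fun j ↦ (univ : Finset (Fin (b j)))) ⊆ T := fun y hy ↦ by
    obtain ⟨x, hx, hxy⟩ := mem_filter_univ _ |>.1 (mem_sigma.1 hy).1
    exact hST x hx y hxy
  calc #S ≤ #((S.image Sigma.fst).sigma fun i ↦ (univ : Finset (Fin (a i)))) :=
        card_le_card fun x hx ↦ mem_sigma.2 ⟨mem_image_of_mem _ hx, mem_univ _⟩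
    _ = ∑ i ∈ S.image Sigma.fst, a i := by simp only [card_sigma, card_univ, Fintype.card_fin]
    _ ≤ ∑ j ∈ J, b j + d := by
        refine hall _ J fun i hi j hij ↦ ?_
        obtain ⟨x, hx, rfl⟩ := mem_image.1 hi
        exact mem_filter_univ _ |>.2 ⟨x, hx, hij⟩
    _ = #(J.sigma fun j ↦ (univ : Finset (Fin (b j)))) + d := by
        simp only [card_sigma, card_univ, Fintype.card_fin]
    _ ≤ #T + d := by gcongr

variable [Fintype κ]

theorem sum_le_sum_natFloor_add_card {ι 𝕜 : Type*} [Semiring 𝕜] [LinearOrder 𝕜]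
    [IsOrderedAddMonoid 𝕜] [FloorSemiring 𝕜] (s : Finset ι) (x : ι → 𝕜) :
    ∑ i ∈ s, x i ≤ ∑ i ∈ s, (⌊x i⌋₊ : 𝕜) + s.card :=
  calc ∑ i ∈ s, x i ≤ ∑ i ∈ s, ((⌊x i⌋₊ : 𝕜) + 1) :=
        Finset.sum_le_sum fun i _ ↦ (Nat.lt_floor_add_one (x i)).le
    _ = ∑ i ∈ s, (⌊x i⌋₊ : 𝕜) + s.card := by
        rw [Finset.sum_add_distrib, Finset.sum_const, nsmul_one]

theorem HallCondition.natFloor_mul {a : ι → ℝ≥0} {b : κ → ℝ≥0} {d : ℝ≥0}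
    (hall : HallCondition R a b d) (N : ℝ≥0) :
    HallCondition R (fun i ↦ ⌊N * a i⌋₊) (fun j ↦ ⌊N * b j⌋₊) (⌈N * d⌉₊ + Fintype.card κ) := by
  intro I J hIJ
  suffices h : ∑ i ∈ I, (⌊N * a i⌋₊ : ℝ≥0) ≤
      ∑ j ∈ J, (⌊N * b j⌋₊ : ℝ≥0) + (⌈N * d⌉₊ + Fintype.card κ) by exact_mod_cast h
  calc ∑ i ∈ I, (⌊N * a i⌋₊ : ℝ≥0) ≤ ∑ i ∈ I, N * a i :=
        Finset.sum_le_sum fun i _ ↦ Nat.floor_le zero_le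
    _ = N * ∑ i ∈ I, a i := Finset.mul_sum .. |>.symm
    _ ≤ N * (∑ j ∈ J, b j + d) := by gcongr; exact hall I J hIJ
    _ = ∑ j ∈ J, N * b j + N * d := by rw [mul_add, Finset.mul_sum]
    _ ≤ (∑ j ∈ J, (⌊N * b j⌋₊ : ℝ≥0) + Fintype.card κ) + ⌈N * d⌉₊ := by
        gcongr
        · refine (sum_le_sum_natFloor_add_card J _).trans ?_
          gcongr
          exact J.card_le_univ
        · exact Nat.le_ceil _
    _ = _ := by ring

variable [Fintype ι]

theorem IsPartialFlow.flip {𝕜 : Type*} [AddCommMonoid 𝕜] [LE 𝕜] {a : ι → 𝕜} {b : κ → 𝕜}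
    {f : ι → κ → 𝕜} (hf : IsPartialFlow R a b f) :
    IsPartialFlow (fun j i ↦ R i j) b a fun j i ↦ f i j :=
  ⟨fun j i ↦ hf.rel_of_ne_zero i j, hf.sum_col_le, hf.sum_row_le⟩

theorem IsPartialFlow.left_ne_zero {a : ι → ℝ≥0} {b : κ → ℝ≥0} {f : ι → κ → ℝ≥0}
    (hf : IsPartialFlow R a b f) {i : ι} {j : κ} (hij : f i j ≠ 0) : a i ≠ 0 := by
  refine ((pos_iff_ne_zero.2 hij).trans_le ?_).ne'
  calc f i j ≤ ∑ j, f i j := Finset.single_le_sum_of_canonicallyOrdered (Finset.mem_univ j)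
    _ ≤ a i := hf.sum_row_le i

open Finset in
theorem HallCondition.exists_isPartialFlow_nat {a : ι → ℕ} {b : κ → ℕ} {d : ℕ}
    (hall : HallCondition R a b d) :
    ∃ f : ι → κ → ℕ, IsPartialFlow R a b f ∧ ∑ i, a i ≤ ∑ i, ∑ j, f i j + d := by
  classical
  obtain ⟨M, hMR, hM_fst, hM_snd, hM_card⟩ := exists_matching_of_card_le_card_add
    (r := fun (x : Σ i, Fin (a i)) (y : Σ j, Fin (b j)) ↦ R x.1 y.1) (d := d)
    fun _ _ hST ↦ hall.card_sigma_le hST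
  let f : ι → κ → ℕ := fun i j ↦ #{m ∈ M | m.1.1 = i ∧ m.2.1 = j}
  have hrow : ∀ i, ∑ j, f i j = #{m ∈ M | m.1.1 = i} := fun i ↦ by
    rw [card_eq_sum_card_fiberwise (f := fun m ↦ m.2.1) (t := univ) (by simp)]
    simp only [f, filter_filter]
  have hcol : ∀ j, ∑ i, f i j = #{m ∈ M | m.2.1 = j} := fun j ↦ by
    rw [card_eq_sum_card_fiberwise (f := fun m ↦ m.1.1) (t := univ) (by simp)]
    simp only [f, filter_filter, and_comm]
  refine ⟨f, ⟨fun i j hij ↦ ?_, fun i ↦ ?_, fun j ↦ ?_⟩, ?_⟩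
  · obtain ⟨m, hm⟩ := card_ne_zero.1 hij
    obtain ⟨hmM, rfl, rfl⟩ := mem_filter.1 hm
    exact hMR m hmM
  · calc ∑ j, f i j = #{m ∈ M | m.1.1 = i} := hrow i
      _ ≤ #(({i} : Finset ι).sigma fun i ↦ (univ : Finset (Fin (a i)))) :=
          card_le_card_of_injOn Prod.fst (fun m hm ↦ by simp_all)
            (hM_fst.mono fun m hm ↦ (mem_filter.1 hm).1)
      _ = a i := by simp only [card_sigma, card_univ, Fintype.card_fin, sum_singleton]
  · calc ∑ i, f i j = #{m ∈ M | m.2.1 = j} := hcol j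
      _ ≤ #(({j} : Finset κ).sigma fun j ↦ (univ : Finset (Fin (b j)))) :=
          card_le_card_of_injOn Prod.snd (fun m hm ↦ by simp_all)
            (hM_snd.mono fun m hm ↦ (mem_filter.1 hm).1)
      _ = b j := by simp only [card_sigma, card_univ, Fintype.card_fin, sum_singleton]
  · calc ∑ i, a i = Fintype.card (Σ i, Fin (a i)) := by simp
      _ ≤ #M + d := hM_card
      _ = ∑ i, ∑ j, f i j + d := by
        simp only [hrow]
        rw [card_eq_sum_card_fiberwise (f := fun m ↦ m.1.1) (t := univ) (by simp)]

theorem HallCondition.exists_isPartialFlow {a : ι → ℝ≥0} {b : κ → ℝ≥0} {d δ : ℝ≥0}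
    (hall : HallCondition R a b d) (hδ : 0 < δ) :
    ∃ f : ι → κ → ℝ≥0, IsPartialFlow R a b f ∧ ∑ i, a i ≤ ∑ i, ∑ j, f i j + d + δ := by
  -- Scale by `N` and round to integers: rounding costs at most `N * δ` in total.
  obtain ⟨N, hN⟩ := exists_nat_ge ((Fintype.card ι + Fintype.card κ + 1) / δ)
  have hN_pos : (0 : ℝ≥0) < N := lt_of_lt_of_le (by positivity) hN
  have hNδ : (Fintype.card ι + Fintype.card κ + 1 : ℝ≥0) ≤ N * δ := (div_le_iff₀ hδ).1 hN
  obtain ⟨c, hc, hc_total⟩ := (hall.natFloor_mul N).exists_isPartialFlow_nat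
  have hdiv : ∀ {n : ℕ} {x : ℝ≥0}, n ≤ ⌊N * x⌋₊ → (n : ℝ≥0) / N ≤ x := fun {n x} hn ↦
    div_le_of_le_mul₀ zero_le zero_le <| calc
      (n : ℝ≥0) ≤ ⌊N * x⌋₊ := by exact_mod_cast hn
      _ ≤ x * N := (Nat.floor_le zero_le).trans_eq (mul_comm _ _)
  refine ⟨fun i j ↦ c i j / N, ⟨fun i j hij ↦ hc.rel_of_ne_zero i j ?_, fun i ↦ ?_, fun j ↦ ?_⟩, ?_⟩
  · rintro h
    simp [h] at hij
  · rw [← Finset.sum_div, ← Nat.cast_sum]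
    exact hdiv (hc.sum_row_le i)
  · rw [← Finset.sum_div, ← Nat.cast_sum]
    exact hdiv (hc.sum_col_le j)
  · refine le_of_mul_le_mul_left ?_ hN_pos
    calc N * ∑ i, a i = ∑ i, N * a i := Finset.mul_sum ..
      _ ≤ ∑ i, (⌊N * a i⌋₊ : ℝ≥0) + Fintype.card ι := sum_le_sum_natFloor_add_card _ _
      _ ≤ (∑ i, ∑ j, (c i j : ℝ≥0) + (⌈N * d⌉₊ + Fintype.card κ)) + Fintype.card ι := by
          gcongr
          exact_mod_cast hc_total
      _ ≤ (∑ i, ∑ j, (c i j : ℝ≥0) + (N * d + 1 + Fintype.card κ)) + Fintype.card ι := by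
          gcongr
          exact (Nat.ceil_lt_add_one zero_le).le
      _ = ∑ i, ∑ j, (c i j : ℝ≥0) + N * d + (Fintype.card ι + Fintype.card κ + 1) := by ring
      _ ≤ ∑ i, ∑ j, (c i j : ℝ≥0) + N * d + N * δ := by gcongr
      _ = N * (∑ i, ∑ j, (c i j : ℝ≥0) / N + d + δ) := by
          simp only [← Finset.sum_div]
          field_simp

end Flow

section Block

open ProbabilityTheory
open scoped ENNReal NNReal

variable {X Y ι κ : Type*} [MeasurableSpace X] [MeasurableSpace Y]

theorem sum_smul_cond_le [Fintype ι] {μ : Measure X} {P : ι → Set X} {w : ι → ℝ≥0∞}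
    (hP : ∀ i, MeasurableSet (P i)) (hP_disj : Pairwise (Function.onFun Disjoint P))
    (hw : ∀ i, w i ≤ μ (P i)) : ∑ i, w i • μ[|P i] ≤ μ :=
  calc ∑ i, w i • μ[|P i] ≤ ∑ i, μ.restrict (P i) := by
        refine Finset.sum_le_sum fun i _ ↦ ?_
        rw [ProbabilityTheory.cond, smul_smul]
        refine Measure.le_iff.2 fun s _ ↦ mul_le_of_le_one_left' ?_
        exact ENNReal.div_le_of_le_mul (by simpa only [one_mul] using hw i)
    _ = μ.restrict (⋃ i, P i) := by rw [Measure.restrict_iUnion hP_disj hP, Measure.sum_fintype]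
    _ ≤ μ := Measure.restrict_le_self

/-- The measure on `X × Y` that moves mass `f i j` from the cell `P i` to the cell `Q j`,
distributed inside this pair of cells as the product of the conditional measures of `μ` and `ν`. -/
def blockPlan [Fintype ι] [Fintype κ] (μ : Measure X) (ν : Measure Y) (P : ι → Set X)
    (Q : κ → Set Y) (f : ι → κ → ℝ≥0) : Measure (X × Y) :=
  ∑ i, ∑ j, f i j • (μ[|P i]).prod (ν[|Q j])

variable [Fintype ι] [Fintype κ] {μ : Measure X} {ν : Measure Y} {P : ι → Set X} {Q : κ → Set Y}
  {R : ι → κ → Prop} {f : ι → κ → ℝ≥0}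

theorem map_swap_blockPlan :
    (blockPlan μ ν P Q f).map Prod.swap = blockPlan ν μ Q P fun j i ↦ f i j := by
  simp only [blockPlan, Measure.map_finset_sum measurable_swap.aemeasurable, Measure.map_smul,
    Measure.prod_swap]
  exact Finset.sum_comm

theorem IsPartialFlow.map_fst_blockPlan_le {b : κ → ℝ≥0}
    (hf : IsPartialFlow R (fun i ↦ (μ (P i)).toNNReal) b f) (hP : ∀ i, MeasurableSet (P i))
    (hP_disj : Pairwise (Function.onFun Disjoint P)) :
    (blockPlan μ ν P Q f).map Prod.fst ≤ μ := by
  have hrow : ∀ i, ∑ j, (f i j : ℝ≥0∞) ≤ μ (P i) := fun i ↦ calc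
    ∑ j, (f i j : ℝ≥0∞) ≤ (μ (P i)).toNNReal := by exact_mod_cast hf.sum_row_le i
    _ ≤ μ (P i) := ENNReal.coe_toNNReal_le_self
  calc (blockPlan μ ν P Q f).map Prod.fst
      = ∑ i, ∑ j, f i j • (ν[|Q j]) Set.univ • μ[|P i] := by
        simp only [blockPlan, Measure.map_finset_sum measurable_fst.aemeasurable,
          Measure.map_smul, Measure.map_fst_prod]
    _ ≤ ∑ i, (∑ j, (f i j : ℝ≥0∞)) • μ[|P i] := by
        simp only [Finset.sum_smul]
        refine Finset.sum_le_sum fun i _ ↦ Finset.sum_le_sum fun j _ ↦ ?_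
        exact Measure.le_iff.2 fun s _ ↦ mul_le_mul_right (mul_le_of_le_one_left' prob_le_one) _
    _ ≤ μ := sum_smul_cond_le hP hP_disj hrow

theorem IsPartialFlow.map_snd_blockPlan_le {a : ι → ℝ≥0}
    (hf : IsPartialFlow R a (fun j ↦ (ν (Q j)).toNNReal) f) (hQ : ∀ j, MeasurableSet (Q j))
    (hQ_disj : Pairwise (Function.onFun Disjoint Q)) :
    (blockPlan μ ν P Q f).map Prod.snd ≤ ν := by
  have h := hf.flip.map_fst_blockPlan_le (ν := μ) (Q := P) hQ hQ_disj
  rwa [← map_swap_blockPlan, Measure.map_map measurable_fst measurable_swap] at h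

theorem IsPartialFlow.blockPlan_univ
    (hf : IsPartialFlow R (fun i ↦ (μ (P i)).toNNReal) (fun j ↦ (ν (Q j)).toNNReal) f) :
    blockPlan μ ν P Q f Set.univ = ∑ i, ∑ j, (f i j : ℝ≥0∞) := by
  simp only [blockPlan, Measure.finsetSum_apply, Measure.smul_apply]
  refine Finset.sum_congr rfl fun i _ ↦ Finset.sum_congr rfl fun j _ ↦ ?_
  obtain hij | hij := eq_or_ne (f i j) 0
  · simp only [hij, zero_smul, ENNReal.coe_zero]
  · obtain ⟨hμ_zero, hμ_top⟩ := ENNReal.toNNReal_ne_zero.1 (hf.left_ne_zero hij)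
    obtain ⟨hν_zero, hν_top⟩ := ENNReal.toNNReal_ne_zero.1 (hf.flip.left_ne_zero hij)
    have := cond_isProbabilityMeasure_of_finite hμ_zero hμ_top
    have := cond_isProbabilityMeasure_of_finite hν_zero hν_top
    rw [measure_univ, ENNReal.smul_def, smul_eq_mul, mul_one]

theorem IsPartialFlow.ae_blockPlan {a : ι → ℝ≥0} {b : κ → ℝ≥0} (hf : IsPartialFlow R a b f)
    (hP : ∀ i, MeasurableSet (P i)) (hQ : ∀ j, MeasurableSet (Q j)) :
    ∀ᵐ z ∂blockPlan μ ν P Q f, ∃ i j, R i j ∧ z.1 ∈ P i ∧ z.2 ∈ Q j := by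
  simp only [blockPlan, ae_finsetSum_measure_iff]
  intro i _ j _
  obtain hij | hij := eq_or_ne (f i j) 0
  · rw [hij, zero_smul, ae_zero]
    exact Filter.eventually_bot
  refine Measure.ae_smul_measure ?_ _
  filter_upwards [Measure.quasiMeasurePreserving_fst.ae (ae_cond_mem (hP i)),
    Measure.quasiMeasurePreserving_snd.ae (ae_cond_mem (hQ j))] with z hz₁ hz₂
  exact ⟨i, j, hf.rel_of_ne_zero i j hij, hz₁, hz₂⟩

end Block

section Strassen

open scoped ENNReal NNReal

theorem measure_le_add_of_ae_imp {X Y : Type*} [MeasurableSpace X] [MeasurableSpace Y]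
    {μ : Measure X} {ν : Measure Y} [IsFiniteMeasure μ] {γ : Measure (X × Y)} {ε : ℝ≥0∞}
    (hγμ : γ.map Prod.fst ≤ μ) (hγν : γ.map Prod.snd ≤ ν) (hγ : μ Set.univ ≤ γ Set.univ + ε)
    {A : Set X} {T : Set Y} (hA : MeasurableSet A) (hAT : ∀ᵐ z ∂γ, z.1 ∈ A → z.2 ∈ T) :
    μ A ≤ ν T + ε := by
  have hAc : γ (Prod.fst ⁻¹' Aᶜ) ≤ μ Aᶜ :=
    (Measure.le_map_apply measurable_fst.aemeasurable _).trans (hγμ _)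
  have hT : γ (Prod.fst ⁻¹' A) ≤ ν T := calc
    γ (Prod.fst ⁻¹' A) ≤ γ (Prod.snd ⁻¹' T) := measure_mono_ae hAT
    _ ≤ ν T := (Measure.le_map_apply measurable_snd.aemeasurable _).trans (hγν _)
  refine (ENNReal.add_le_add_iff_right (measure_ne_top μ Aᶜ)).1 ?_
  calc μ A + μ Aᶜ = μ Set.univ := measure_add_measure_compl hA
    _ ≤ γ Set.univ + ε := hγ
    _ = γ (Prod.fst ⁻¹' A) + γ (Prod.fst ⁻¹' Aᶜ) + ε := by
        rw [Set.preimage_compl, measure_add_measure_compl (measurable_fst hA)]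
    _ ≤ ν T + μ Aᶜ + ε := by gcongr
    _ = ν T + ε + μ Aᶜ := add_right_comm ..

variable {X : Type*} [PseudoMetricSpace X] [MeasurableSpace X]

theorem exists_finite_cells_measure_compl_le [OpensMeasurableSpace X]
    [TopologicalSpace.SeparableSpace X] (ρ : Measure X) [IsFiniteMeasure ρ] {δ : ℝ} (hδ : 0 < δ)
    {η : ℝ≥0∞} (hη : 0 < η) :
    ∃ (n : ℕ) (P : Fin n → Set X), (∀ i, MeasurableSet (P i)) ∧
      Pairwise (Function.onFun Disjoint P) ∧ (∀ i, ∀ x ∈ P i, ∀ y ∈ P i, dist x y ≤ δ) ∧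
      ρ (⋃ i, P i)ᶜ ≤ η := by
  obtain ⟨B, hB, hB_bdd, hB_diam, hB_univ, hB_disj⟩ :=
    SeparableSpace.exists_measurable_partition_diam_le X hδ
  have htail := tendsto_measure_biUnion_Ici_zero_of_pairwise_disjoint (μ := ρ)
    (fun i ↦ (hB i).nullMeasurableSet) hB_disj
  obtain ⟨n, hn⟩ := (htail.eventually_lt_const hη).exists
  refine ⟨n, fun i ↦ B i, fun i ↦ hB i, hB_disj.comp_of_injective Fin.val_injective,
    fun i x hx y hy ↦ (Metric.dist_le_diam_of_mem (hB_bdd i) hx hy).trans (hB_diam i),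
    (measure_mono fun x hx ↦ ?_).trans hn.le⟩
  obtain ⟨i, hi⟩ := Set.mem_iUnion.1 (hB_univ.symm ▸ Set.mem_univ x)
  exact Set.mem_biUnion (not_lt.1 fun hin ↦ hx (Set.mem_iUnion.2 ⟨⟨i, hin⟩, hi⟩)) hi

theorem measure_biUnion_eq_sum_toNNReal {Y ι : Type*} [MeasurableSpace Y] (ρ : Measure Y)
    [IsFiniteMeasure ρ] {P : ι → Set Y} (hP : ∀ i, MeasurableSet (P i))
    (hP_disj : Pairwise (Function.onFun Disjoint P)) (I : Finset ι) :
    ρ (⋃ i ∈ I, P i) = (∑ i ∈ I, (ρ (P i)).toNNReal : ℝ≥0) := by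
  rw [measure_biUnion_finset (fun i _ j _ hij ↦ hP_disj hij) fun i _ ↦ hP i,
    ENNReal.ofNNReal_finsetSum]
  exact Finset.sum_congr rfl fun i _ ↦ (ENNReal.coe_toNNReal (measure_ne_top ρ _)).symm

theorem thickening_biUnion_subset {Y ι : Type*} [PseudoMetricSpace Y] {P : ι → Set Y} {r : ℝ}
    {I J : Finset ι} (hIJ : ∀ i ∈ I, ∀ j, (∃ x ∈ P i, ∃ y ∈ P j, dist x y < r) → j ∈ J) :
    Metric.thickening r (⋃ i ∈ I, P i) ⊆ (⋃ j ∈ J, P j) ∪ (⋃ j, P j)ᶜ := by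
  intro y hy
  obtain ⟨x, hx, hyx⟩ := Metric.mem_thickening_iff.1 hy
  obtain ⟨i, hi, hxi⟩ := Set.mem_iUnion₂.1 hx
  refine or_iff_not_imp_right.2 fun hy_cell ↦ ?_
  obtain ⟨j, hyj⟩ := Set.mem_iUnion.1 (not_not.1 hy_cell)
  exact Set.mem_biUnion (hIJ i hi j ⟨x, hxi, y, hyj, by rwa [dist_comm]⟩) hyj

variable {μ ν : Measure X} [IsFiniteMeasure μ] [IsFiniteMeasure ν]

theorem hallCondition_of_forall_measure_le_thickening {ι : Type*} {P : ι → Set X}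
    (hP : ∀ i, MeasurableSet (P i)) (hP_disj : Pairwise (Function.onFun Disjoint P)) {r : ℝ}
    {ε η : ℝ≥0} (hη : ν (⋃ i, P i)ᶜ ≤ η)
    (h : ∀ A, MeasurableSet A → μ A ≤ ν (Metric.thickening r A) + ε) :
    HallCondition (fun i j ↦ ∃ x ∈ P i, ∃ y ∈ P j, dist x y < r) (fun i ↦ (μ (P i)).toNNReal)
      (fun j ↦ (ν (P j)).toNNReal) (ε + η) := by
  intro I J hIJ
  suffices key : μ (⋃ i ∈ I, P i) ≤ ν (⋃ j ∈ J, P j) + (ε + η) by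
    rw [measure_biUnion_eq_sum_toNNReal μ hP hP_disj,
      measure_biUnion_eq_sum_toNNReal ν hP hP_disj] at key
    exact_mod_cast key
  calc μ (⋃ i ∈ I, P i) ≤ ν (Metric.thickening r (⋃ i ∈ I, P i)) + ε :=
        h _ (I.measurableSet_biUnion fun i _ ↦ hP i)
    _ ≤ ν (⋃ j ∈ J, P j) + ν (⋃ i, P i)ᶜ + ε := by
        gcongr
        exact (measure_mono (thickening_biUnion_subset hIJ)).trans (measure_union_le _ _)
    _ ≤ ν (⋃ j ∈ J, P j) + η + ε := by gcongr
    _ = ν (⋃ j ∈ J, P j) + (ε + η) := by rw [add_assoc, add_comm (η : ℝ≥0∞)]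

theorem exists_measure_ae_dist_lt_of_forall_measure_le_thickening [OpensMeasurableSpace X]
    [TopologicalSpace.SeparableSpace X] {r : ℝ} {ε δ : ℝ≥0} (hδ : 0 < δ)
    (h : ∀ A, MeasurableSet A → μ A ≤ ν (Metric.thickening r A) + ε) :
    ∃ γ : Measure (X × X), γ.map Prod.fst ≤ μ ∧ γ.map Prod.snd ≤ ν ∧
      μ Set.univ ≤ γ Set.univ + (ε + δ) ∧ ∀ᵐ z ∂γ, dist z.1 z.2 < r + δ := by
  let η : ℝ≥0 := δ / 3
  have hη : 0 < η := by positivity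
  have hδη : δ = η + η + η := by simp only [η]; ring
  obtain ⟨n, P, hP, hP_disj, hP_diam, hP_tail⟩ := exists_finite_cells_measure_compl_le (μ + ν)
    (NNReal.coe_pos.2 hη) (ENNReal.coe_pos.2 hη)
  have hμ_tail : μ (⋃ i, P i)ᶜ ≤ η := (Measure.le_add_right le_rfl _).trans hP_tail
  have hν_tail : ν (⋃ i, P i)ᶜ ≤ η := (Measure.le_add_left le_rfl _).trans hP_tail
  obtain ⟨f, hf, hf_total⟩ :=
    (hallCondition_of_forall_measure_le_thickening hP hP_disj hν_tail h).exists_isPartialFlow hη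
  refine ⟨blockPlan μ ν P P f, hf.map_fst_blockPlan_le hP hP_disj,
    hf.map_snd_blockPlan_le hP hP_disj, ?_, ?_⟩
  · have hμ_cells : μ (⋃ i, P i) = (∑ i, (μ (P i)).toNNReal : ℝ≥0) := by
      simpa only [Finset.mem_univ, Set.iUnion_true] using
        measure_biUnion_eq_sum_toNNReal μ hP hP_disj Finset.univ
    calc μ Set.univ = μ (⋃ i, P i) + μ (⋃ i, P i)ᶜ :=
          (measure_add_measure_compl (MeasurableSet.iUnion hP)).symm
      _ ≤ (∑ i, ∑ j, f i j + (ε + η) + η : ℝ≥0) + η := by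
          rw [hμ_cells]
          gcongr
      _ = blockPlan μ ν P P f Set.univ + (ε + δ) := by
          rw [hf.blockPlan_univ, hδη]
          push_cast
          ring
  · filter_upwards [hf.ae_blockPlan hP hP] with z ⟨i, j, ⟨x, hx, y, hy, hxy⟩, hz₁, hz₂⟩
    calc dist z.1 z.2 ≤ dist z.1 x + dist x y + dist y z.2 := dist_triangle4 ..
      _ < η + r + (η + η) := by
          linarith [hP_diam i z.1 hz₁ x hx, hP_diam j y hy z.2 hz₂, NNReal.coe_pos.2 hη]
      _ = r + δ := by
          rw [hδη]
          push_cast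
          ring

end Strassen

section PartialPlan

open scoped ENNReal

variable {X : Type*} [MeasurableSpace X] {μ ν : Measure X} {α : ℝ} {γ : Measure (X × X)}

theorem IsPartialPlan.swap (hγ : IsPartialPlan μ ν α γ) :
    IsPartialPlan ν μ α (γ.map Prod.swap) := by
  refine ⟨?_, ?_, ?_⟩
  · rw [Measure.map_apply measurable_swap MeasurableSet.univ, Set.preimage_univ, hγ.1]
  · rw [Measure.map_map measurable_fst measurable_swap]
    exact hγ.2.2
  · rw [Measure.map_map measurable_snd measurable_swap]
    exact hγ.2.1

theorem exists_le_measure_univ_eq {Y : Type*} [MeasurableSpace Y] (γ : Measure Y)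
    [IsFiniteMeasure γ] {m : ℝ≥0∞} (hm : m ≤ γ Set.univ) : ∃ γ' ≤ γ, γ' Set.univ = m := by
  obtain hγ | hγ := eq_or_ne (γ Set.univ) 0
  · exact ⟨γ, le_rfl, hγ.trans (le_zero_iff.1 (hγ ▸ hm)).symm⟩
  · refine ⟨(m / γ Set.univ) • γ, Measure.le_iff.2 fun s _ ↦ ?_, ?_⟩
    · exact mul_le_of_le_one_left' (ENNReal.div_le_of_le_mul (by rwa [one_mul]))
    · exact ENNReal.div_mul_cancel hγ (measure_ne_top γ _)

theorem exists_le_isPartialPlan [IsFiniteMeasure μ] (hγμ : γ.map Prod.fst ≤ μ)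
    (hγν : γ.map Prod.snd ≤ ν) (hα : ENNReal.ofReal α ≤ γ Set.univ) :
    ∃ γ' ≤ γ, IsPartialPlan μ ν α γ' := by
  have := isFiniteMeasure_of_le μ hγμ
  have := Measure.isFiniteMeasure_of_map (μ := γ) measurable_fst.aemeasurable
  obtain ⟨γ', hγ', hγ'_univ⟩ := exists_le_measure_univ_eq γ hα
  exact ⟨γ', hγ', hγ'_univ, (Measure.map_mono hγ' measurable_fst).trans hγμ,
    (Measure.map_mono hγ' measurable_snd).trans hγν⟩

theorem exists_isPartialPlan [IsProbabilityMeasure μ] [IsProbabilityMeasure ν] (hα : α ≤ 1) :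
    ∃ γ, IsPartialPlan μ ν α γ := by
  obtain ⟨γ, -, hγ⟩ := exists_le_isPartialPlan (μ := μ) (ν := ν) (γ := μ.prod ν) (α := α)
    (by rw [Measure.map_fst_prod, measure_univ, one_smul])
    (by rw [Measure.map_snd_prod, measure_univ, one_smul])
    (by rwa [measure_univ, ENNReal.ofReal_le_one])
  exact ⟨γ, hγ⟩

end PartialPlan

section Distances

open TopologicalSpace

variable {X : Type*} [MetricSpace X] [MeasurableSpace X] {μ ν : Measure X} {γ : Measure (X × X)}

theorem IsPartialPlan.measure_le_thickening_add [OpensMeasurableSpace X] [IsProbabilityMeasure μ]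
    {ε r : ℝ} (hγ : IsPartialPlan μ ν (1 - ε) γ)
    (hdist : ∀ᵐ z ∂γ, dist z.1 z.2 < r) {A : Set X} (hA : MeasurableSet A) :
    μ A ≤ ν (Metric.thickening r A) + ENNReal.ofReal ε := by
  refine measure_le_add_of_ae_imp hγ.2.1 hγ.2.2 ?_ hA ?_
  · rw [measure_univ, hγ.1, ← ENNReal.ofReal_one]
    simpa only [sub_add_cancel] using ENNReal.ofReal_add_le (p := 1 - ε) (q := ε)
  · filter_upwards [hdist] with z hz hzA
    exact Metric.mem_thickening_iff.2 ⟨z.1, hzA, by rwa [dist_comm]⟩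

theorem ae_dist_le_planCostInf [BoundedSpace X] (γ : Measure (X × X)) :
    ∀ᵐ z ∂γ, dist z.1 z.2 ≤ planCostInf γ := by
  have hbdd : essSup (fun z : X × X ↦ ENNReal.ofReal (dist z.1 z.2)) γ ≠ ⊤ := by
    refine ne_top_of_le_ne_top ENNReal.ofReal_ne_top
      (essSup_le_of_ae_le (ENNReal.ofReal (Metric.diam (Set.univ : Set X))) ?_)
    exact Filter.Eventually.of_forall fun z ↦ ENNReal.ofReal_le_ofReal
      (Metric.dist_le_diam_of_mem (Bornology.IsBounded.all _) (Set.mem_univ _) (Set.mem_univ _))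
  filter_upwards [ENNReal.ae_le_essSup fun z : X × X ↦ ENNReal.ofReal (dist z.1 z.2)] with z hz
  exact (ENNReal.ofReal_le_iff_le_toReal hbdd).1 hz

theorem IsPartialPlan.partialWInf_le {α c : ℝ} (hγ : IsPartialPlan μ ν α γ) (hc : 0 ≤ c)
    (hdist : ∀ᵐ z ∂γ, dist z.1 z.2 ≤ c) : partialWInf α μ ν ≤ c := by
  have hbdd : BddBelow {c : ℝ | ∃ γ, IsPartialPlan μ ν α γ ∧ c = planCostInf γ} := by
    refine ⟨0, ?_⟩
    rintro _ ⟨γ, -, rfl⟩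
    exact ENNReal.toReal_nonneg
  calc partialWInf α μ ν ≤ planCostInf γ := csInf_le hbdd ⟨γ, hγ, rfl⟩
    _ ≤ c := ENNReal.toReal_le_of_le_ofReal hc (essSup_le_of_ae_le _ (by
        filter_upwards [hdist] with z hz using ENNReal.ofReal_le_ofReal hz))

theorem exists_isPartialPlan_ae_dist_lt [BoundedSpace X] [IsProbabilityMeasure μ]
    [IsProbabilityMeasure ν] {α c : ℝ} (hα : α ≤ 1) (hc : partialWInf α μ ν < c) :
    ∃ γ, IsPartialPlan μ ν α γ ∧ ∀ᵐ z ∂γ, dist z.1 z.2 < c := by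
  obtain ⟨γ₀, hγ₀⟩ := exists_isPartialPlan (μ := μ) (ν := ν) hα
  have hne : {c : ℝ | ∃ γ, IsPartialPlan μ ν α γ ∧ c = planCostInf γ}.Nonempty :=
    ⟨_, γ₀, hγ₀, rfl⟩
  obtain ⟨_, ⟨γ, hγ, rfl⟩, hγc⟩ := exists_lt_of_csInf_lt hne hc
  exact ⟨γ, hγ, (ae_dist_le_planCostInf γ).mono fun z hz ↦ hz.trans_lt hγc⟩

theorem partialWInf_zero_le {c : ℝ} (hc : 0 ≤ c) : partialWInf 0 μ ν ≤ c := by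
  have hzero : IsPartialPlan μ ν 0 0 := by
    refine ⟨by rw [ENNReal.ofReal_zero, Measure.coe_zero, Pi.zero_apply], ?_, ?_⟩ <;>
    · rw [Measure.map_zero]
      exact Measure.zero_le _
  exact hzero.partialWInf_le hc (by rw [ae_zero]; exact Filter.eventually_bot)

theorem rpwInf_le {k ε : ℝ} (hε₀ : 0 ≤ ε) (hε₁ : ε ≤ 1)
    (h : partialWInf (1 - ε) μ ν ≤ k * ε) : RPWInf k μ ν ≤ ε :=
  csInf_le ⟨0, fun _ h ↦ h.1.1⟩ ⟨⟨hε₀, hε₁⟩, h⟩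

theorem lpDist_le {ε : ℝ} (hε : 0 < ε) (h : ∀ A, MeasurableSet A →
    μ A ≤ ν (Metric.thickening ε A) + ENNReal.ofReal ε ∧
    ν A ≤ μ (Metric.thickening ε A) + ENNReal.ofReal ε) : LPdist μ ν ≤ ε :=
  csInf_le ⟨0, fun _ h ↦ h.1.le⟩ ⟨hε, h⟩

theorem rpwInf_le_add_of_forall_measure_le_thickening [OpensMeasurableSpace X] [SeparableSpace X]
    [IsProbabilityMeasure μ] [IsFiniteMeasure ν] {ε δ : ℝ} (hε : 0 ≤ ε) (hδ : 0 < δ)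
    (h : ∀ A, MeasurableSet A → μ A ≤ ν (Metric.thickening ε A) + ENNReal.ofReal ε) :
    RPWInf 1 μ ν ≤ ε + δ := by
  obtain hεδ | hεδ := le_total 1 (ε + δ)
  · refine le_trans (rpwInf_le zero_le_one le_rfl ?_) hεδ
    rw [sub_self, one_mul]
    exact partialWInf_zero_le zero_le_one
  lift ε to NNReal using hε
  lift δ to NNReal using hδ.le
  simp only [ENNReal.ofReal_coe_nnreal] at h
  obtain ⟨γ₀, hγ₀μ, hγ₀ν, hγ₀_univ, hγ₀_dist⟩ :=
    exists_measure_ae_dist_lt_of_forall_measure_le_thickening (NNReal.coe_pos.1 hδ) h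
  obtain ⟨γ, hγγ₀, hγ⟩ := exists_le_isPartialPlan (α := 1 - (ε + δ)) hγ₀μ hγ₀ν (by
    rw [ENNReal.ofReal_sub 1 (by positivity), ENNReal.ofReal_one, ← NNReal.coe_add,
      ENNReal.ofReal_coe_nnreal]
    exact tsub_le_iff_right.2 (by simpa only [measure_univ, ENNReal.coe_add] using hγ₀_univ))
  refine rpwInf_le (by positivity) hεδ ?_
  rw [one_mul]
  refine hγ.partialWInf_le (by positivity) (ae_mono hγγ₀ ?_)
  filter_upwards [hγ₀_dist] with z hz using hz.le

theorem lpDist_le_add_of_partialWInf_le [OpensMeasurableSpace X] [BoundedSpace X]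
    [IsProbabilityMeasure μ] [IsProbabilityMeasure ν] {ε δ : ℝ} (hε : 0 ≤ ε) (hδ : 0 < δ)
    (h : partialWInf (1 - ε) μ ν ≤ ε) : LPdist μ ν ≤ ε + δ := by
  obtain ⟨γ, hγ, hγ_dist⟩ := exists_isPartialPlan_ae_dist_lt (sub_le_self 1 hε)
    (h.trans_lt (lt_add_of_pos_right ε hδ))
  have hswap_dist : ∀ᵐ z ∂γ.map Prod.swap, dist z.1 z.2 < ε + δ := by
    refine (MeasurableEquiv.prodComm.measurableEmbedding.ae_map_iff).2 ?_
    filter_upwards [hγ_dist] with z hz using by rwa [dist_comm] at hz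
  have hofReal : ENNReal.ofReal ε ≤ ENNReal.ofReal (ε + δ) :=
    ENNReal.ofReal_le_ofReal (le_add_of_nonneg_right hδ.le)
  refine lpDist_le (by positivity) fun A hA ↦ ⟨?_, ?_⟩
  · exact (hγ.measure_le_thickening_add hγ_dist hA).trans (by gcongr)
  · exact (hγ.swap.measure_le_thickening_add hswap_dist hA).trans (by gcongr)

theorem rpwInf_le_lpDist [OpensMeasurableSpace X] [SeparableSpace X] [IsProbabilityMeasure μ]
    [IsProbabilityMeasure ν] : RPWInf 1 μ ν ≤ LPdist μ ν := by
  refine le_csInf ⟨1, one_pos, fun A _ ↦ ?_⟩ fun ε ⟨hε, h⟩ ↦ le_of_forall_pos_le_add fun δ hδ ↦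
    rpwInf_le_add_of_forall_measure_le_thickening hε.le hδ fun A hA ↦ (h A hA).1
  rw [ENNReal.ofReal_one]
  exact ⟨prob_le_one.trans le_add_self, prob_le_one.trans le_add_self⟩

theorem lpDist_le_rpwInf [OpensMeasurableSpace X] [BoundedSpace X] [IsProbabilityMeasure μ]
    [IsProbabilityMeasure ν] : LPdist μ ν ≤ RPWInf 1 μ ν := by
  refine le_csInf ⟨1, ⟨zero_le_one, le_rfl⟩, ?_⟩ fun ε ⟨hε, h⟩ ↦ le_of_forall_pos_le_add fun δ hδ ↦
    lpDist_le_add_of_partialWInf_le hε.1 hδ (by rwa [one_mul] at h)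
  rw [sub_self, one_mul]
  exact partialWInf_zero_le zero_le_one

end Distances

theorem rpwInf_eq_levyProkhorov_general
    {X : Type*} [MetricSpace X] [BoundedSpace X] [TopologicalSpace.SeparableSpace X]
    [MeasurableSpace X] [OpensMeasurableSpace X]
    (μ ν : Measure X) [IsProbabilityMeasure μ] [IsProbabilityMeasure ν] :
    RPWInf 1 μ ν = LPdist μ ν :=
  le_antisymm rpwInf_le_lpDist lpDist_le_rpwInf

/-- For any Borel probability measures `μ, ν` on a compact metric
space of unit diameter, `RPW_{∞,1}(μ, ν)` equals the Lévy–Prokhorov distance. -/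
theorem rpwInf_eq_levyProkhorov
    {X : Type*} [MetricSpace X] [CompactSpace X] [MeasurableSpace X] [BorelSpace X]
    (hdiam : ∀ a b : X, dist a b ≤ 1)
    (μ ν : Measure X) [IsProbabilityMeasure μ] [IsProbabilityMeasure ν] :
    RPWInf 1 μ ν = LPdist μ ν :=
  rpwInf_eq_levyProkhorov_general μ ν
end
end
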